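/- For each p ∈ Δ(K), the maximum of d(u,v) over information structures u, v with marg_K u = marg_K v = p equals 2·(1 − max_{k∈K} p_k). -/

import Mathlib

open scoped BigOperators ENNReal

namespace ValueDistance

/-- An information structure: a probability distribution on `K × ℕ × ℕ`
(state, signal of player 1, signal of player 2). -/
abbrev InfoStruct (K : Type) := PMF (K × ℕ × ℕ)

/-- A behavior strategy / garbling : a map `ℕ → Δ(ℕ)`. -/
abbrev Garbling : Type := ℕ → PMF ℕ

variable {K : Type}

/-- `g` is a payoff function with action bound `L` : values in `[-1,1]`,
`g k i j = -1` when `i ≥ L`, and `g k i j = 1` when `i < L` and `j ≥ L`. -/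
def IsPayoffL (L : ℕ) (g : K → ℕ → ℕ → ℝ) : Prop :=
  (∀ k i j, g k i j ∈ Set.Icc (-1 : ℝ) 1) ∧
  (∀ k i j, L ≤ i → g k i j = -1) ∧
  (∀ k i j, i < L → L ≤ j → g k i j = 1)

/-- `g` belongs to the set `𝒢` of payoff functions. -/
def IsPayoff (g : K → ℕ → ℕ → ℝ) : Prop := ∃ L, IsPayoffL L g

/-- `g` belongs to the set `𝒢₁` of single-agent (player 1) problems. -/
def IsPayoff1 (g : K → ℕ → ℕ → ℝ) : Prop :=
  IsPayoff g ∧ ∀ k i j j', g k i j = g k i j'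

/-- Expected payoff in the Bayesian game `Γ(u,g)` when player 1 uses the behavior
strategy `σ` and player 2 uses `τ`. -/
noncomputable def payoff (u : InfoStruct K) (g : K → ℕ → ℕ → ℝ)
    (σ τ : Garbling) : ℝ :=
  ∑' (x : K × ℕ × ℕ) (i : ℕ) (j : ℕ),
    (u x).toReal * (σ x.2.1 i).toReal * (τ x.2.2 j).toReal * g x.1 i j

/-- The value `val(u,g)` of the zero-sum Bayesian game `Γ(u,g)`
(the common value of `sup inf` and `inf sup` of the expected payoff;
we take `sup inf` as the definition). -/
noncomputable def val (u : InfoStruct K) (g : K → ℕ → ℕ → ℝ) : ℝ :=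
  ⨆ σ : Garbling, ⨅ τ : Garbling, payoff u g σ τ

/-- Total variation distance `‖u − v‖`. -/
noncomputable def tv {α : Type} (u v : PMF α) : ℝ :=
  ∑' x : α, |(u x).toReal - (v x).toReal|

/-- `q.u` : player 1's signal garbled through `q`. -/
noncomputable def garbleLeft (q : Garbling) (u : InfoStruct K) : InfoStruct K :=
  u.bind (fun x => (q x.2.1).map (fun c => (x.1, c, x.2.2)))

/-- `u.q` : player 2's signal garbled through `q`. -/
noncomputable def garbleRight (u : InfoStruct K) (q : Garbling) : InfoStruct K :=
  u.bind (fun x => (q x.2.2).map (fun d => (x.1, x.2.1, d)))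

/-- The value-based distance `d(u,v) = sup_{g ∈ 𝒢} |val(u,g) − val(v,g)|`. -/
noncomputable def dVal (u v : InfoStruct K) : ℝ :=
  ⨆ g : {g : K → ℕ → ℕ → ℝ // IsPayoff g}, |val u g.1 - val v g.1|

/-- The single-agent distance `d₁(u,v) = sup_{g ∈ 𝒢₁} |val(u,g) − val(v,g)|`. -/
noncomputable def d1 (u v : InfoStruct K) : ℝ :=
  ⨆ g : {g : K → ℕ → ℕ → ℝ // IsPayoff1 g}, |val u g.1 - val v g.1|

/-- Marginal of an information structure on `K × ℕ` (state, player 1's signal). -/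
noncomputable def marg1 (u : InfoStruct K) : PMF (K × ℕ) :=
  u.map (fun x => (x.1, x.2.1))

/-- Garbling of a single-agent information structure:
`(q.w)(k,c) = Σ_s w(k,s)·q(s)({c})`. -/
noncomputable def garble1 (q : Garbling) (w : PMF (K × ℕ)) : PMF (K × ℕ) :=
  w.bind (fun x => (q x.2).map (fun c => (x.1, c)))

/-- Marginal of an information structure on the states. -/
noncomputable def margK (u : InfoStruct K) : PMF K := u.map Prod.fst

/-- Marginal of an information structure on `K × ℕ` (state, player 2's signal). -/
noncomputable def margKD (u : InfoStruct K) : PMF (K × ℕ) :=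
  u.map (fun x => (x.1, x.2.2))

/-- `σ.q` : on signal `c`, draw `c'` according to `q(c)` and play `σ(c')`. -/
noncomputable def compGarble (σ q : Garbling) : Garbling :=
  fun c => (q c).bind σ

/-- `u ∈ 𝒰(L)` : both players' signals are `< L` with probability 1. -/
def InU (L : ℕ) (u : InfoStruct K) : Prop :=
  ∀ x : K × ℕ × ℕ, u x ≠ 0 → x.2.1 < L ∧ x.2.2 < L

/-- `q ∈ 𝒬(L)` : garbling with values supported on `{0,…,L−1}`. -/
def GarblingIn (L : ℕ) (q : Garbling) : Prop :=
  ∀ n m, q n m ≠ 0 → m < L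

/-- The two players' signals are conditionally independent given the state:
`u(k)·u(k,c,d) = u(k,c)·u(k,d)` for all `k, c, d`
(equivalently `u(c,d|k) = u(c|k)·u(d|k)` whenever `u(k) > 0`). -/
def CondIndep (u : InfoStruct K) : Prop :=
  ∀ (k : K) (c d : ℕ),
    (∑' y : ℕ × ℕ, u (k, y)) * u (k, c, d)
      = (∑' d' : ℕ, u (k, c, d')) * (∑' c' : ℕ, u (k, c', d))

end ValueDistance

namespace ValueDistance

section helpers
variable {K : Type}

/-- expectation of a real function under a PMF -/
noncomputable def ex {α : Type} (a : PMF α) (f : α → ℝ) : ℝ := ∑' x, (a x).toReal * f x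

section exlem
variable {α β : Type}

lemma summ_toReal (a : PMF α) : Summable (fun x => (a x).toReal) :=
  ENNReal.summable_toReal (by rw [a.tsum_coe]; simp)

lemma tsum_toReal (a : PMF α) : ∑' x, (a x).toReal = 1 := by
  rw [← ENNReal.tsum_toReal_eq (fun x => a.apply_ne_top x), a.tsum_coe]; simp

lemma summ_ex (a : PMF α) {f : α → ℝ} (hf : ∀ x, |f x| ≤ 1) :
    Summable (fun x => (a x).toReal * f x) := by
  refine Summable.of_norm_bounded (summ_toReal a) (fun x => ?_)
  rw [Real.norm_eq_abs, abs_mul, abs_of_nonneg ENNReal.toReal_nonneg]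
  exact mul_le_of_le_one_right ENNReal.toReal_nonneg (hf x)

lemma ex_const (a : PMF α) (c : ℝ) : ex a (fun _ => c) = c := by
  unfold ex; rw [tsum_mul_right, tsum_toReal, one_mul]

lemma ex_mono (a : PMF α) {f g : α → ℝ} (hf : ∀ x, |f x| ≤ 1) (hg : ∀ x, |g x| ≤ 1)
    (h : ∀ x, f x ≤ g x) : ex a f ≤ ex a g :=
  Summable.tsum_le_tsum (fun x => mul_le_mul_of_nonneg_left (h x) ENNReal.toReal_nonneg)
    (summ_ex a hf) (summ_ex a hg)

lemma ex_abs (a : PMF α) {f : α → ℝ} (hf : ∀ x, |f x| ≤ 1) : |ex a f| ≤ 1 := by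
  rw [abs_le]
  constructor
  · rw [← ex_const a (-1)]
    exact ex_mono a (by simp) hf (fun x => (abs_le.1 (hf x)).1)
  · rw [← ex_const a 1]
    exact ex_mono a hf (by simp) (fun x => (abs_le.1 (hf x)).2)

lemma ex_comm (a : PMF α) (b : PMF β) {f : α → β → ℝ} (hf : ∀ x y, |f x y| ≤ 1) :
    ex a (fun x => ex b (f x)) = ex b (fun y => ex a (fun x => f x y)) := by
  unfold ex
  simp_rw [← tsum_mul_left]
  have hS : Summable (Function.uncurry fun (x : α) (y : β) =>
      (a x).toReal * ((b y).toReal * f x y)) := by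
    have h : Summable (fun z : α × β => (a z.1).toReal * (b z.2).toReal) :=
      (summ_toReal a).mul_of_nonneg (summ_toReal b) (fun _ => ENNReal.toReal_nonneg)
        (fun _ => ENNReal.toReal_nonneg)
    refine Summable.of_norm_bounded h (fun z => ?_)
    simp only [Function.uncurry]
    rw [Real.norm_eq_abs, abs_mul, abs_mul, abs_of_nonneg ENNReal.toReal_nonneg,
      abs_of_nonneg ENNReal.toReal_nonneg]
    exact mul_le_mul_of_nonneg_left
      (mul_le_of_le_one_right ENNReal.toReal_nonneg (hf _ _)) ENNReal.toReal_nonneg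
  rw [← hS.tsum_comm]
  exact tsum_congr fun y => tsum_congr fun x => by ring

lemma ex_pure (x : α) (f : α → ℝ) : ex (PMF.pure x) f = f x := by
  classical
  unfold ex
  rw [tsum_eq_single x]
  · simp
  · intro y hy
    simp [PMF.pure_apply, hy]

lemma summ_bind (a : PMF α) (m : α → PMF β) :
    Summable (fun z : α × β => (a z.1).toReal * (m z.1 z.2).toReal) := by
    have h0 : (0 : α × β → ℝ) ≤ fun z : α × β => (a z.1).toReal * (m z.1 z.2).toReal :=
      fun z => mul_nonneg ENNReal.toReal_nonneg ENNReal.toReal_nonneg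
    refine (summable_prod_of_nonneg h0).2 ⟨fun x => Summable.mul_left (a x).toReal (summ_toReal (m x)), ?_⟩
    refine (summ_toReal a).congr fun x => ?_
    have h : ∑' y, (a x).toReal * (m x y).toReal = (a x).toReal * ∑' y, (m x y).toReal := tsum_mul_left
    rw [tsum_toReal, mul_one] at h
    exact h.symm

lemma ex_bind (a : PMF α) (m : α → PMF β) {f : β → ℝ} (hf : ∀ x, |f x| ≤ 1) :
    ex (a.bind m) f = ex a (fun x => ex (m x) f) := by
  unfold ex
  have h1 : ∀ y, ((a.bind m) y).toReal = ∑' x, (a x).toReal * (m x y).toReal := by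
    intro y
    rw [PMF.bind_apply, ENNReal.tsum_toReal_eq]
    · simp
    · intro x; exact ENNReal.mul_ne_top (a.apply_ne_top x) ((m x).apply_ne_top y)
  simp_rw [h1, ← tsum_mul_left, ← tsum_mul_right]
  have hS : Summable (Function.uncurry fun (x : α) (y : β) =>
      (a x).toReal * ((m x y).toReal * f y)) := by
    have hs := summ_bind a m
    refine Summable.of_norm_bounded hs (fun z => ?_)
    simp only [Function.uncurry]
    rw [Real.norm_eq_abs, ← mul_assoc, abs_mul,
      abs_of_nonneg (mul_nonneg ENNReal.toReal_nonneg ENNReal.toReal_nonneg)]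
    exact mul_le_of_le_one_right (mul_nonneg ENNReal.toReal_nonneg ENNReal.toReal_nonneg) (hf _)
  rw [← hS.tsum_comm]
  exact tsum_congr fun y => tsum_congr fun x => by ring

lemma ex_map (a : PMF α) (m : α → β) {f : β → ℝ} (hf : ∀ x, |f x| ≤ 1) :
    ex (a.map m) f = ex a (fun x => f (m x)) := by
  rw [← PMF.bind_pure_comp, ex_bind _ _ hf]
  simp only [Function.comp, ex_pure]

end exlem

lemma payoff_eq (u : InfoStruct K) (g : K → ℕ → ℕ → ℝ) (σ τ : Garbling) :
    payoff u g σ τ =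
      ex u (fun x => ex (σ x.2.1) (fun i => ex (τ x.2.2) (fun j => g x.1 i j))) := by
  unfold payoff ex
  simp_rw [← tsum_mul_left]
  refine tsum_congr fun x => tsum_congr fun i => tsum_congr fun j => by ring

lemma payoff_map (p : PMF K) (a b : K → ℕ) {g : K → ℕ → ℕ → ℝ} (hg : ∀ k i j, |g k i j| ≤ 1)
    (σ τ : Garbling) :
    payoff (p.map (fun k => (k, a k, b k))) g σ τ =
      ex p (fun k => ex (σ (a k)) (fun i => ex (τ (b k)) (fun j => g k i j))) := by
  rw [payoff_eq]
  exact ex_map p (fun k => (k, a k, b k))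
    (f := fun x : K × ℕ × ℕ => ex (σ x.2.1) (fun i => ex (τ x.2.2) (fun j => g x.1 i j)))
    (fun x => ex_abs _ fun i => ex_abs _ fun j => hg x.1 i j)

lemma ex2_abs {g : ℕ → ℕ → ℝ} (hg : ∀ i j, |g i j| ≤ 1) (a b : PMF ℕ) :
    |ex a (fun i => ex b (fun j => g i j))| ≤ 1 :=
  ex_abs _ fun i => ex_abs _ fun j => hg i j

lemma payoff_abs (u : InfoStruct K) {g : K → ℕ → ℕ → ℝ} (hg : ∀ k i j, |g k i j| ≤ 1)
    (σ τ : Garbling) : |payoff u g σ τ| ≤ 1 := by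
  rw [payoff_eq]
  exact ex_abs _ fun x => ex2_abs (hg x.1) _ _

lemma inf_le (u : InfoStruct K) {g : K → ℕ → ℕ → ℝ} (hg : ∀ k i j, |g k i j| ≤ 1)
    (σ τ : Garbling) : ⨅ τ : Garbling, payoff u g σ τ ≤ payoff u g σ τ :=
  ciInf_le ⟨-1, by rintro _ ⟨t, rfl⟩; exact (abs_le.1 (payoff_abs u hg σ t)).1⟩ τ

instance : Nonempty Garbling := ⟨fun c => PMF.pure c⟩

lemma le_val (u : InfoStruct K) {g : K → ℕ → ℕ → ℝ} (hg : ∀ k i j, |g k i j| ≤ 1)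
    (σ : Garbling) : ⨅ τ : Garbling, payoff u g σ τ ≤ val u g := by
  refine le_ciSup (f := fun σ : Garbling => ⨅ τ : Garbling, payoff u g σ τ) ⟨1, ?_⟩ σ
  rintro _ ⟨s, rfl⟩
  exact (inf_le u hg s s).trans (abs_le.1 (payoff_abs u hg s s)).2

lemma cond_exists (u : InfoStruct K) (k : K) (hk : margK u k ≠ 0) :
    ∃ m : InfoStruct K, ∀ F : K → ℕ × ℕ → ℝ, (∀ k y, |F k y| ≤ 1) →
      |ex u (fun x => F x.1 x.2) - (margK u k).toReal * ex m (fun x => F k x.2)|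
        ≤ 1 - (margK u k).toReal := by
  classical
  have hs : ∑' x, ({x | x.1 = k} : Set (K × ℕ × ℕ)).indicator u x = margK u k := by
    unfold margK
    rw [PMF.map_apply]
    refine tsum_congr fun x => ?_
    by_cases h : x.1 = k
    · simp [Set.indicator, h]
    · simp [Set.indicator, h, Ne.symm h]
  have hex : ∃ a ∈ ({x | x.1 = k} : Set (K × ℕ × ℕ)), a ∈ u.support := by
    by_contra hc
    push Not at hc
    apply hk
    rw [← hs, ENNReal.tsum_eq_zero]
    intro x
    by_cases h : x.1 = k
    · have := hc x h
      simp only [PMF.mem_support_iff, not_not] at this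
      simp [Set.indicator, this]
    · simp [Set.indicator, h]
  have hp0 : (margK u k).toReal ≠ 0 :=
    (ENNReal.toReal_pos hk ((margK u).apply_ne_top k)).ne'
  have key : ∀ f : K × ℕ × ℕ → ℝ,
      (margK u k).toReal * ex (u.filter {x | x.1 = k} hex) f
        = ex u (fun x => if x.1 = k then f x else 0) := by
    intro f
    unfold ex
    rw [← tsum_mul_left]
    refine tsum_congr fun x => ?_
    rw [PMF.filter_apply, hs]
    by_cases h : x.1 = k
    · simp only [Set.indicator, Set.mem_ofPred_eq, h, if_true, ENNReal.toReal_mul,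
        ENNReal.toReal_inv]
      field_simp
    · simp [Set.indicator, h]
  refine ⟨u.filter {x | x.1 = k} hex, fun F hF => ?_⟩
  have h1 := key (fun _ => 1)
  rw [ex_const, mul_one] at h1
  have b1 : ∀ x : K × ℕ × ℕ, |(if x.1 = k then F k x.2 else 0)| ≤ 1 := by
    intro x; split_ifs
    · exact hF _ _
    · simp
  have b2 : ∀ x : K × ℕ × ℕ, |(if x.1 = k then (1:ℝ) else 0)| ≤ 1 := by
    intro x; split_ifs <;> simp
  have sF := summ_ex u (f := fun x => F x.1 x.2) (fun x => hF _ _)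
  have sb1 := summ_ex u b1
  have sb2 := summ_ex u b2
  have e1 : ex u (fun x => F x.1 x.2) - ex u (fun x => if x.1 = k then F k x.2 else 0)
      = ∑' x, (u x).toReal * (F x.1 x.2 - if x.1 = k then F k x.2 else 0) := by
    unfold ex
    rw [← Summable.tsum_sub sF sb1]
    refine tsum_congr fun x => by ring
  have e2 : 1 - (margK u k).toReal
      = ∑' x, (u x).toReal * (1 - if x.1 = k then 1 else 0) := by
    have h5 := Summable.tsum_sub (summ_toReal u) sb2
    rw [tsum_toReal u] at h5
    rw [h1]
    refine h5.symm.trans (tsum_congr fun x => by ring)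
  have s2 : Summable (fun x => (u x).toReal * (1 - if x.1 = k then (1:ℝ) else 0)) := by
    refine ((summ_toReal u).sub sb2).congr fun x => by ring
  rw [key, e1, e2, ← Real.norm_eq_abs]
  refine tsum_of_norm_bounded s2.hasSum fun x => ?_
  rw [Real.norm_eq_abs, abs_mul, abs_of_nonneg ENNReal.toReal_nonneg]
  refine mul_le_mul_of_nonneg_left ?_ ENNReal.toReal_nonneg
  by_cases h : x.1 = k
  · simp [h]
  · simp [h, hF]

lemma val_sub_le (u v : InfoStruct K) (k : K) (hk : margK u k ≠ 0) (huv : margK v = margK u)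
    {g : K → ℕ → ℕ → ℝ} (hg : ∀ k i j, |g k i j| ≤ 1) :
    val v g - val u g ≤ 2 * (1 - (margK u k).toReal) := by
  obtain ⟨mu, hmu⟩ := cond_exists u k hk
  obtain ⟨mv, hmv⟩ := cond_exists v k (huv ▸ hk)
  rw [huv] at hmv
  rw [sub_le_iff_le_add]
  refine ciSup_le fun σ => ?_
  set s : PMF ℕ := mv.bind (fun y => σ y.2.1) with hs
  have h1 : (⨅ τ : Garbling, payoff v g σ τ) - 2 * (1 - (margK u k).toReal)
      ≤ ⨅ τ : Garbling, payoff u g (fun _ => s) τ := by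
    refine le_ciInf fun τ => ?_
    set t : PMF ℕ := mu.bind (fun y => τ y.2.2) with ht
    have h2 := inf_le v hg σ (fun _ => t)
    have h3 := hmu (fun k y => ex s (fun i => ex (τ y.2) (fun j => g k i j)))
      (fun k y => ex2_abs (hg k) _ _)
    have h4 := hmv (fun k y => ex (σ y.1) (fun i => ex t (fun j => g k i j)))
      (fun k y => ex2_abs (hg k) _ _)
    have e3 : ex mu (fun x => ex s (fun i => ex (τ x.2.2) (fun j => g k i j)))
        = ex s (fun i => ex t (fun j => g k i j)) := by
      rw [ex_comm _ _ (fun x i => ex_abs _ fun j => hg k i j)]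
      congr 1; funext i
      rw [ht, ex_bind _ _ (fun j => hg k i j)]
    have e4 : ex mv (fun x => ex (σ x.2.1) (fun i => ex t (fun j => g k i j)))
        = ex s (fun i => ex t (fun j => g k i j)) := by
      rw [hs, ex_bind _ _ (fun i => ex_abs _ fun j => hg k i j)]
    rw [payoff_eq] at h2
    rw [payoff_eq]
    simp only [e3] at h3
    simp only [e4] at h4
    rw [abs_le] at h3 h4
    linarith [h3.1, h4.2]
  linarith [le_val u hg (fun _ => s)]

lemma IsPayoff.abs_le {g : K → ℕ → ℕ → ℝ} (h : IsPayoff g) : ∀ k i j, |g k i j| ≤ 1 := by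
  obtain ⟨L, h, -⟩ := h
  intro k i j
  exact _root_.abs_le.2 (h k i j)

lemma ex_eq_le [Fintype K] (p : PMF K) (e : K → ℕ) (he : Function.Injective e) (n : ℕ) :
    1 - (⨆ k : K, (p k).toReal) ≤ ex p (fun k => if n = e k then 0 else 1) := by
  have hb : ∀ k, (p k).toReal ≤ ⨆ k : K, (p k).toReal :=
    fun k => le_ciSup (f := fun k => (p k).toReal) (Set.finite_range _).bddAbove k
  have h1 := tsum_toReal p
  unfold ex
  by_cases h : ∃ k, n = e k
  · obtain ⟨k, rfl⟩ := h
    have : ∑' x, (p x).toReal - ∑' x, (p x).toReal * (if e k = e x then 0 else 1)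
        = (p k).toReal := by
      rw [← Summable.tsum_sub (summ_toReal p) (summ_ex p (fun x => by split_ifs <;> simp)),
        tsum_eq_single k]
      · simp
      · intro y hy
        have : e k ≠ e y := fun hh => hy (he hh).symm
        simp [this]
    linarith [hb k]
  · push Not at h
    simp only [h, if_false, mul_one, h1]
    have : 0 ≤ ⨆ k : K, (p k).toReal := Real.iSup_nonneg fun k => ENNReal.toReal_nonneg
    linarith

end helpers

/-- For a fixed common marginal `p` over the state, the maximum of `d(u,v)`
over information structures `u, v` with `marg_K u = marg_K v = p` equals
`2·(1 − max_k p_k)`. -/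
theorem diameter_same_prior (K : Type) [Fintype K] (hK : 2 ≤ Fintype.card K)
    (p : PMF K) :
    IsGreatest {r : ℝ | ∃ u v : InfoStruct K, margK u = p ∧ margK v = p ∧ r = dVal u v}
      (2 * (1 - ⨆ k : K, (p k).toReal)) := by
  classical
  have hne : Nonempty K := Fintype.card_pos_iff.1 (by omega)
  obtain ⟨k0, hk0⟩ : ∃ k0, (p k0).toReal = ⨆ k : K, (p k).toReal :=
    exists_eq_ciSup_of_finite
  have hp0 : p k0 ≠ 0 := by
    intro h
    obtain ⟨k, hk⟩ := p.support_nonempty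
    have h2 : (p k).toReal ≤ ⨆ k : K, (p k).toReal :=
      le_ciSup (f := fun k => (p k).toReal) (Set.finite_range _).bddAbove k
    have h3 := ENNReal.toReal_pos ((p.mem_support_iff k).1 hk) (p.apply_ne_top k)
    rw [← hk0, h] at h2
    simp at h2
    linarith
  have ub : ∀ u v : InfoStruct K, margK u = p → margK v = p →
      ∀ g : {g : K → ℕ → ℕ → ℝ // IsPayoff g},
        |val u g.1 - val v g.1| ≤ 2 * (1 - ⨆ k : K, (p k).toReal) := by
    intro u v hu hv g
    have h1 := val_sub_le u v k0 (by rw [hu]; exact hp0) (by rw [hu, hv]) g.2.abs_le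
    have h2 := val_sub_le v u k0 (by rw [hv]; exact hp0) (by rw [hu, hv]) g.2.abs_le
    rw [hu, hk0] at h1
    rw [hv, hk0] at h2
    rw [abs_le]
    constructor <;> linarith
  have g0 : Nonempty {g : K → ℕ → ℕ → ℝ // IsPayoff g} :=
    ⟨⟨fun _ _ _ => -1, 0, by intros; simp, by intros; rfl, by intros; omega⟩⟩
  constructor
  · set n := Fintype.card K with hn
    let e : K → ℕ := fun k => (Fintype.equivFin K k : ℕ)
    have he : Function.Injective e := fun a b h =>
      (Fintype.equivFin K).injective (Fin.ext h)
    have hel : ∀ k, e k < n := fun k => (Fintype.equivFin K k).isLt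
    let g : K → ℕ → ℕ → ℝ := fun k i j =>
      if n ≤ i then -1 else if n ≤ j then 1 else
        (if j = e k then 0 else 1) - (if i = e k then 0 else 1)
    have hg : IsPayoff g := by
      refine ⟨n, ?_, ?_, ?_⟩
      · intro k i j
        simp only [g, Set.mem_Icc]
        split_ifs <;> norm_num
      · intro k i j h; simp [g, h]
      · intro k i j h h'; simp [g, h', not_le.2 h]
    have hga := hg.abs_le
    have hg1 : ∀ k j, g k (e k) j = if j = e k then 0 else 1 := by
      intro k j
      have := hel k
      simp only [g, not_le.2 this, if_false, if_true, sub_zero]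
      split_ifs <;> first | rfl | omega
    have hg2 : ∀ k i, g k i (e k) = -(if i = e k then 0 else 1) := by
      intro k i
      have := hel k
      simp only [g, not_le.2 this, if_false, if_true, zero_sub]
      split_ifs <;> first | rfl | omega
    let u : InfoStruct K := p.map (fun k => (k, e k, 0))
    let v : InfoStruct K := p.map (fun k => (k, 0, e k))
    have hu : margK u = p := by
      simp only [margK, u, PMF.map_comp]
      exact PMF.map_id p
    have hv : margK v = p := by
      simp only [margK, v, PMF.map_comp]
      exact PMF.map_id p
    have bnd : ∀ (k : K) (j : ℕ), |(if j = e k then (0:ℝ) else 1)| ≤ 1 := by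
      intro k j; split_ifs <;> simp
    have M := ex_eq_le p e he
    have M0 : 0 ≤ 1 - ⨆ k : K, (p k).toReal := by
      have h := ub u v hu hv ⟨g, hg⟩
      have := (abs_nonneg _).trans h
      linarith
    have M1 : 1 - (⨆ k : K, (p k).toReal) ≤ 1 := by
      have : 0 ≤ ⨆ k : K, (p k).toReal := Real.iSup_nonneg fun k => ENNReal.toReal_nonneg
      linarith
    have Mt : ∀ t : PMF ℕ, 1 - (⨆ k : K, (p k).toReal) ≤
        ex p (fun k => ex t (fun j => if j = e k then 0 else 1)) := by
      intro t
      rw [ex_comm _ _ bnd, ← ex_const t (1 - (⨆ k : K, (p k).toReal))]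
      exact ex_mono t (fun _ => by rw [abs_le]; constructor <;> linarith)
        (fun j => ex_abs _ fun k => bnd k j) M
    have PM : ∀ σ τ, payoff u g σ τ = ex p (fun k => ex (σ (e k)) (fun i => ex (τ 0) (fun j => g k i j))) :=
      fun σ τ => payoff_map p e (fun _ => 0) hga σ τ
    have PMv : ∀ σ τ, payoff v g σ τ = ex p (fun k => ex (σ 0) (fun i => ex (τ (e k)) (fun j => g k i j))) :=
      fun σ τ => payoff_map p (fun _ => 0) e hga σ τ
    have vu : 1 - (⨆ k : K, (p k).toReal) ≤ val u g := by
      refine le_trans (le_ciInf fun τ => ?_) (le_val u hga (fun c => PMF.pure c))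
      rw [PM]
      simp only [ex_pure, hg1]
      exact Mt _
    have vv : val v g ≤ -(1 - (⨆ k : K, (p k).toReal)) := by
      refine ciSup_le fun σ => (inf_le v hga σ (fun c => PMF.pure c)).trans ?_
      rw [PMv]
      simp only [ex_pure, hg2]
      have := Mt (σ 0)
      have e1 : ex p (fun k => ex (σ 0) (fun i => -(if i = e k then (0:ℝ) else 1)))
          = - ex p (fun k => ex (σ 0) (fun i => if i = e k then (0:ℝ) else 1)) := by
        simp only [ex, mul_neg, tsum_neg]
      rw [e1]
      linarith
    refine ⟨u, v, hu, hv, le_antisymm ?_ (ciSup_le (ub u v hu hv))⟩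
    have h := le_ciSup (f := fun g : {g : K → ℕ → ℕ → ℝ // IsPayoff g} =>
      |val u g.1 - val v g.1|) ⟨_, by rintro _ ⟨t, rfl⟩; exact ub u v hu hv t⟩ ⟨g, hg⟩
    refine le_trans ?_ h
    refine le_trans ?_ (le_abs_self _)
    linarith
  · rintro r ⟨u, v, hu, hv, rfl⟩
    exact ciSup_le (ub u v hu hv)

end ValueDistance
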